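/- arXiv:1607.05462 — 2 statements merged into one kernel-verified Lean document; each statement's English description precedes it below -/
import Mathlib

section
/- Let m and r be positive integers with gcd(r, m) = 1, r ≥ 2, and set g = (r−1)(m−1)/2. For every integer t with t ≥ r·m, the cardinality of Ω_{0,…,0,t} (all parameters s_1 = ⋯ = s_r = 0) equals 1 − g + t. -/
/-!
Since all parameters vanish, the conditions `0 ≤ i + m j_μ < m` force every `j_μ` to be `-⌊i/m⌋`.
Writing `i = k + m q` with `0 ≤ k < m` and `q ≥ 0`, the last condition becomes `r k + m q ≤ t`, so
`Ω` is parametrized by the pairs `(k, q)` with `0 ≤ k < m` and `0 ≤ q ≤ ⌊(t - r k)/m⌋`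
(`omega_eq_image`, `omegaPoint_injOn`). Because `t ≥ r m`, each `k` contributes exactly
`⌊(t - r k)/m⌋ + 1` points. Multiplying the sum of these floors by `m` leaves the sum of
`t - r k` minus the sum of the residues `(t - r k) mod m`; as `gcd(r, m) = 1`, those residues run
through `0, …, m - 1` once each (`sum_residues`), which evaluates the sum (`sum_floor`).
-/

/-- The lattice point set `Ω_{s₁,…,s_r,t}`: tuples `(i, j₂, …, j_r) ∈ ℤ^r`, encoded as
functions `v : Fin r → ℤ` with `v 0 = i` and `v μ = j_{μ+1}` for `μ ≠ 0`; the parameters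
`s₁, …, s_r` are encoded as `s : Fin r → ℤ` with `s μ = s_{μ+1}`.  The conditions are
`i + s₁ ≥ 0`, `0 ≤ i + m·j_μ + s_μ < m` for `2 ≤ μ ≤ r`, and `r·i + m·(j₂ + ⋯ + j_r) ≤ t`. -/
def Omega (m r : ℕ) [NeZero r] (s : Fin r → ℤ) (t : ℤ) : Set (Fin r → ℤ) :=
  {v : Fin r → ℤ |
    0 ≤ v 0 + s 0 ∧
    (∀ μ : Fin r, μ ≠ 0 → 0 ≤ v 0 + (m : ℤ) * v μ + s μ ∧ v 0 + (m : ℤ) * v μ + s μ < (m : ℤ)) ∧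
    (r : ℤ) * v 0 + (m : ℤ) * ∑ μ ∈ Finset.univ.erase (0 : Fin r), v μ ≤ t}

/-- The point of `Ω_{0,…,0,t}` with `i = k + m q`, for which every `j_μ` is `-q`; the pair is
`(k, q)`. -/
def omegaPoint (m r : ℕ) [NeZero r] (p : Σ _ : ℕ, ℕ) : Fin r → ℤ :=
  fun μ => if μ = 0 then (p.1 : ℤ) + m * p.2 else -(p.2 : ℤ)

/-- The pairs `(k, q)` with `0 ≤ k < m` and `0 ≤ q ≤ ⌊(t - r k)/m⌋`. -/
def omegaIndex (m r : ℕ) (t : ℤ) : Finset (Σ _ : ℕ, ℕ) :=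
  (Finset.range m).sigma fun k => Finset.range ((t - r * k) / m + 1).toNat

lemma mem_omegaIndex {m r : ℕ} (hm : 0 < m) {t : ℤ} {p : Σ _ : ℕ, ℕ} :
    p ∈ omegaIndex m r t ↔ p.1 < m ∧ (r : ℤ) * p.1 + m * p.2 ≤ t := by
  have hm' : (0 : ℤ) < m := by exact_mod_cast hm
  have h := Int.le_ediv_iff_mul_le (a := (p.2 : ℤ)) (b := t - r * p.1) hm'
  simp only [omegaIndex, Finset.mem_sigma, Finset.mem_range]
  refine and_congr_right fun _ => ?_
  constructor
  · intro h1
    have := h.1 (by omega)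
    linarith
  · intro h1
    have := h.2 (by linarith)
    omega

lemma sum_erase_const (r : ℕ) [NeZero r] (c : ℤ) :
    ∑ _μ ∈ Finset.univ.erase (0 : Fin r), c = ((r : ℤ) - 1) * c := by
  have : 1 ≤ r := NeZero.one_le
  rw [Finset.sum_const, Finset.card_erase_of_mem (Finset.mem_univ _), Finset.card_univ,
    Fintype.card_fin, nsmul_eq_mul]
  push_cast [this]
  ring

lemma omega_eq_image {m r : ℕ} [NeZero r] (hm : 0 < m) (t : ℤ) :
    Omega m r (fun _ => 0) t = Set.image (omegaPoint m r) (omegaIndex m r t) := by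
  have hm' : (0 : ℤ) < m := by exact_mod_cast hm
  ext v
  simp only [Omega, Set.mem_ofPred_eq, Set.mem_image, Finset.mem_coe, mem_omegaIndex hm, add_zero]
  constructor
  · rintro ⟨h0, hj, hs⟩
    have hq : 0 ≤ v 0 / m := Int.ediv_nonneg h0 hm'.le
    have hk : 0 ≤ v 0 % m := Int.emod_nonneg _ hm'.ne'
    have hkm : v 0 % m < m := Int.emod_lt_of_pos _ hm'
    have hdiv := Int.emod_add_mul_ediv (v 0) m
    have hv : ∀ μ : Fin r, μ ≠ 0 → v μ = -(v 0 / m) := by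
      intro μ hμ
      obtain ⟨h1, h2⟩ := hj μ hμ
      have h3 : (m : ℤ) * (v 0 / m + v μ) < m * 1 := by linarith
      have h4 : (m : ℤ) * (-1) < m * (v 0 / m + v μ) := by linarith
      have h5 := lt_of_mul_lt_mul_left h3 hm'.le
      have h6 := lt_of_mul_lt_mul_left h4 hm'.le
      omega
    refine ⟨⟨(v 0 % m).toNat, (v 0 / m).toNat⟩, ⟨by dsimp only; omega, ?_⟩, ?_⟩
    · rw [Finset.sum_congr rfl fun μ hμ => hv μ (Finset.ne_of_mem_erase hμ),
        sum_erase_const] at hs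
      simp only [Int.toNat_of_nonneg hq, Int.toNat_of_nonneg hk]
      calc (r : ℤ) * (v 0 % m) + m * (v 0 / m)
          = r * (v 0 % m + m * (v 0 / m)) + m * ((r - 1) * -(v 0 / m)) := by ring
        _ = r * v 0 + m * ((r - 1) * -(v 0 / m)) := by rw [hdiv]
        _ ≤ t := hs
    · funext μ
      simp only [omegaPoint, Int.toNat_of_nonneg hq, Int.toNat_of_nonneg hk]
      split_ifs with hμ
      · rw [hμ, hdiv]
      · rw [hv μ hμ]
  · rintro ⟨⟨k, q⟩, ⟨hk, hs⟩, rfl⟩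
    dsimp only at hk hs
    refine ⟨?_, fun μ hμ => ?_, ?_⟩
    · simp only [omegaPoint, if_true]
      positivity
    · simp only [omegaPoint, if_true, if_neg hμ]
      constructor
      · linarith [Int.natCast_nonneg k]
      · have : (k : ℤ) < m := by exact_mod_cast hk
        linarith
    · have : ∀ μ ∈ Finset.univ.erase (0 : Fin r), omegaPoint m r ⟨k, q⟩ μ = -(q : ℤ) :=
        fun μ hμ => if_neg (Finset.ne_of_mem_erase hμ)
      rw [Finset.sum_congr rfl this, sum_erase_const]
      simp only [omegaPoint, if_true]
      linarith

lemma omegaPoint_injOn {m r : ℕ} [NeZero r] (hm : 0 < m) (t : ℤ) :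
    Set.InjOn (omegaPoint m r) (omegaIndex m r t : Set (Σ _ : ℕ, ℕ)) := by
  rintro ⟨k, q⟩ h ⟨k', q'⟩ h' heq
  have hk := ((mem_omegaIndex hm).1 (Finset.mem_coe.1 h)).1
  have hk' := ((mem_omegaIndex hm).1 (Finset.mem_coe.1 h')).1
  dsimp only at hk hk'
  have h0 := congrFun heq 0
  simp only [omegaPoint, if_true] at h0
  have h1 : k + m * q = k' + m * q' := by exact_mod_cast h0
  have h2 := congrArg (· % m) h1
  simp only [Nat.add_mul_mod_self_left, Nat.mod_eq_of_lt hk, Nat.mod_eq_of_lt hk'] at h2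
  subst h2
  have h3 := Nat.eq_of_mul_eq_mul_left hm (Nat.add_left_cancel h1)
  subst h3
  rfl

/-- As `k` runs over `0, …, m - 1`, so does `(t - r k) mod m`, because `r` is invertible
modulo `m`. -/
lemma sum_residues {m r : ℕ} (hm : 0 < m) (hgcd : Nat.gcd r m = 1) (t : ℤ) :
    ∑ k ∈ Finset.range m, (t - r * k) % (m : ℤ) = ∑ k ∈ Finset.range m, (k : ℤ) := by
  have hm' : (0 : ℤ) < m := by exact_mod_cast hm
  have hnn : ∀ k : ℕ, 0 ≤ (t - r * k) % (m : ℤ) := fun k => Int.emod_nonneg _ hm'.ne'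
  have hlt : ∀ k : ℕ, (t - r * k) % (m : ℤ) < m := fun k => Int.emod_lt_of_pos _ hm'
  let f : ℕ → ℕ := fun k => ((t - r * k) % (m : ℤ)).toNat
  have hf : ∀ k, (f k : ℤ) = (t - r * k) % (m : ℤ) := fun k => Int.toNat_of_nonneg (hnn k)
  have hinj : Set.InjOn f (Finset.range m : Set ℕ) := by
    intro a ha b hb hab
    have ha' : a < m := by simpa using ha
    have hb' : b < m := by simpa using hb
    have h1 : (t - r * a) % (m : ℤ) = (t - r * b) % (m : ℤ) := by rw [← hf, ← hf, hab]
    have h2 : (m : ℤ) ∣ r * ((b : ℤ) - a) := by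
      have := Int.ModEq.dvd (show (t - r * b) ≡ (t - r * a) [ZMOD m] from h1.symm)
      have h3 : (t - r * a) - (t - r * b) = (r : ℤ) * ((b : ℤ) - a) := by ring
      rwa [h3] at this
    have hco : IsCoprime (m : ℤ) (r : ℤ) :=
      Nat.isCoprime_iff_coprime.2 (Nat.coprime_comm.1 hgcd)
    have h3 := hco.dvd_of_dvd_mul_left h2
    have h4 : (b : ℤ) - a = 0 :=
      Int.eq_zero_of_abs_lt_dvd h3 (by rw [abs_lt]; constructor <;> omega)
    omega
  have himg : (Finset.range m).image f = Finset.range m := by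
    apply Finset.eq_of_subset_of_card_le
    · intro x hx
      obtain ⟨k, -, rfl⟩ := Finset.mem_image.1 hx
      have := hlt k
      rw [← hf] at this
      exact Finset.mem_range.2 (by exact_mod_cast this)
    · rw [Finset.card_image_of_injOn hinj]
  calc ∑ k ∈ Finset.range m, (t - r * k) % (m : ℤ)
      = ∑ k ∈ Finset.range m, (f k : ℤ) := Finset.sum_congr rfl fun k _ => (hf k).symm
    _ = ∑ x ∈ (Finset.range m).image f, (x : ℤ) := (Finset.sum_image hinj).symm
    _ = _ := by rw [himg]

lemma two_mul_sum_range (m : ℕ) : 2 * ∑ k ∈ Finset.range m, (k : ℤ) = m * ((m : ℤ) - 1) := by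
  induction m with
  | zero => simp
  | succ n ih =>
    rw [Finset.sum_range_succ, mul_add, ih]
    push_cast
    ring

lemma sum_floor {m r : ℕ} (hm : 0 < m) (hgcd : Nat.gcd r m = 1) (t : ℤ) :
    2 * ∑ k ∈ Finset.range m, (t - r * k) / (m : ℤ) = 2 * t - (r + 1) * ((m : ℤ) - 1) := by
  have hm' : (m : ℤ) ≠ 0 := by exact_mod_cast hm.ne'
  have h1 : (m : ℤ) * ∑ k ∈ Finset.range m, (t - r * k) / (m : ℤ) =
      ∑ k ∈ Finset.range m, (t - r * k) - ∑ k ∈ Finset.range m, (t - r * k) % (m : ℤ) := by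
    rw [Finset.mul_sum, ← Finset.sum_sub_distrib]
    refine Finset.sum_congr rfl fun k _ => ?_
    linarith [Int.emod_add_mul_ediv (t - r * k) m]
  rw [sum_residues hm hgcd, Finset.sum_sub_distrib, ← Finset.mul_sum, Finset.sum_const,
    Finset.card_range, nsmul_eq_mul] at h1
  have h2 := two_mul_sum_range m
  apply mul_left_cancel₀ hm'
  linear_combination 2 * h1 - (r + 1) * h2

theorem omega_zero_card (m r : ℕ) [NeZero r] (hm : 0 < m) (hr : 2 ≤ r)
    (hgcd : Nat.gcd r m = 1)
    (g : ℤ) (hg : 2 * g = ((r : ℤ) - 1) * ((m : ℤ) - 1))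
    (t : ℤ) (ht : (r : ℤ) * (m : ℤ) ≤ t) :
    (Omega m r (fun _ => 0) t).Finite ∧
      ((Omega m r (fun _ => 0) t).ncard : ℤ) = 1 - g + t := by
  have hm' : (0 : ℤ) < m := by exact_mod_cast hm
  rw [omega_eq_image hm]
  refine ⟨(Finset.finite_toSet _).image _, ?_⟩
  rw [Set.InjOn.ncard_image (omegaPoint_injOn hm t), Set.ncard_coe_finset, omegaIndex,
    Finset.card_sigma, Nat.cast_sum]
  -- `t ≥ r m` makes every floor nonnegative, so no `toNat` truncates.
  have hcard : ∀ k ∈ Finset.range m,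
      ((Finset.range ((t - r * k) / (m : ℤ) + 1).toNat).card : ℤ) = (t - r * k) / m + 1 := by
    intro k hk
    have hkm : (k : ℤ) ≤ m := by exact_mod_cast (Finset.mem_range.1 hk).le
    have h1 : (r : ℤ) * k ≤ r * m := mul_le_mul_of_nonneg_left hkm (by positivity)
    have h2 : 0 ≤ (t - r * k) / (m : ℤ) := Int.ediv_nonneg (by linarith) hm'.le
    rw [Finset.card_range, Int.toNat_of_nonneg (by linarith)]
  rw [Finset.sum_congr rfl hcard, Finset.sum_add_distrib, Finset.sum_const, Finset.card_range,
    nsmul_eq_mul]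
  have h := sum_floor hm hgcd t
  linarith
end

section
/- Let m and r be positive integers with gcd(r, m) = 1 and r ≥ 2, let s_1, …, s_r, t be integers, and let σ be any permutation of {1, …, r}. Then the sets Ω_{s_1,…,s_r,t} and Ω_{s_{σ(1)},…,s_{σ(r)},t} have the same cardinality; that is, the cardinality of Ω_{s_1,…,s_r,t} is a symmetric function of (s_1, …, s_r). -/
/-- The pairs `(c, k)` of a residue `c` modulo `m` and an integer `k ≥ 0` with
`m k + ∑_μ ((c + s_μ) % m - s_μ) ≤ t`. -/
def residueModel (m r : ℕ) (s : Fin r → ℤ) (t : ℤ) : Set (ℤ × ℤ) :=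
  {p | (0 ≤ p.1 ∧ p.1 < m) ∧ 0 ≤ p.2 ∧
    (m : ℤ) * p.2 + ∑ μ, ((p.1 + s μ) % (m : ℤ) - s μ) ≤ t}

lemma residueModel_comp_perm (m r : ℕ) (s : Fin r → ℤ) (t : ℤ) (σ : Equiv.Perm (Fin r)) :
    residueModel m r (s ∘ σ) t = residueModel m r s t := by
  ext p
  have h := Equiv.sum_comp σ (fun μ => (p.1 + s μ) % (m : ℤ) - s μ)
  simp only [residueModel, Set.mem_ofPred_eq, Function.comp_apply, h]

lemma window_iff {m : ℤ} (hm : 0 < m) (x j : ℤ) :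
    (0 ≤ x + m * j ∧ x + m * j < m) ↔ j = -(x / m) := by
  have h1 := Int.emod_add_mul_ediv x m
  have h2 := Int.emod_nonneg x hm.ne'
  have h3 := Int.emod_lt_of_pos x hm
  constructor
  · rintro ⟨h4, h5⟩
    have h6 : j + x / m < 1 := by nlinarith
    have h7 : -1 < j + x / m := by nlinarith
    omega
  · rintro rfl
    constructor <;> linarith

/-- The weight `r i + m ∑ j_μ`, rewritten symmetrically in `s` once the `j_μ` are eliminated. -/
lemma weight_eq (m r : ℕ) [NeZero r] (s v : Fin r → ℤ)
    (hv : ∀ μ : Fin r, μ ≠ 0 → v μ = -((v 0 + s μ) / (m : ℤ))) :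
    (r : ℤ) * v 0 + (m : ℤ) * ∑ μ ∈ Finset.univ.erase (0 : Fin r), v μ =
      (m : ℤ) * ((v 0 + s 0) / (m : ℤ)) + ∑ μ, ((v 0 + s μ) % (m : ℤ) - s μ) := by
  have hsum : ∑ μ ∈ Finset.univ.erase (0 : Fin r), ((v 0 + s μ) % (m : ℤ) - s μ) =
      ∑ μ ∈ Finset.univ.erase (0 : Fin r), (v 0 + (m : ℤ) * v μ) := by
    refine Finset.sum_congr rfl fun μ hμ => ?_
    rw [hv μ (Finset.ne_of_mem_erase hμ)]
    linarith [Int.emod_add_mul_ediv (v 0 + s μ) (m : ℤ)]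
  have hconst : (r : ℤ) * v 0 = v 0 + ∑ μ ∈ Finset.univ.erase (0 : Fin r), v 0 := by
    rw [Finset.add_sum_erase _ (fun _ => v 0) (Finset.mem_univ (0 : Fin r))]
    simp
  rw [← Finset.add_sum_erase _ _ (Finset.mem_univ (0 : Fin r)), hsum, hconst,
    Finset.sum_add_distrib, ← Finset.mul_sum]
  linarith [Int.emod_add_mul_ediv (v 0 + s 0) (m : ℤ)]

lemma mem_Omega_iff (m r : ℕ) [NeZero r] (hm : 0 < m) (s : Fin r → ℤ) (t : ℤ) (v : Fin r → ℤ) :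
    v ∈ Omega m r s t ↔
      0 ≤ (v 0 + s 0) / (m : ℤ) ∧
      (∀ μ : Fin r, μ ≠ 0 → v μ = -((v 0 + s μ) / (m : ℤ))) ∧
      (m : ℤ) * ((v 0 + s 0) / (m : ℤ)) + ∑ μ, ((v 0 + s μ) % (m : ℤ) - s μ) ≤ t := by
  have hm' : (0 : ℤ) < m := by exact_mod_cast hm
  have hwin : (∀ μ : Fin r, μ ≠ 0 →
      0 ≤ v 0 + (m : ℤ) * v μ + s μ ∧ v 0 + (m : ℤ) * v μ + s μ < (m : ℤ)) ↔
      ∀ μ : Fin r, μ ≠ 0 → v μ = -((v 0 + s μ) / (m : ℤ)) := by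
    refine forall₂_congr fun μ _ => ?_
    rw [add_right_comm]
    exact window_iff hm' _ _
  have hnonneg : 0 ≤ v 0 + s 0 ↔ 0 ≤ (v 0 + s 0) / (m : ℤ) :=
    (Int.ediv_nonneg_iff_of_pos hm').symm
  simp only [Omega, Set.mem_ofPred_eq]
  rw [hwin, hnonneg]
  refine and_congr_right fun _ => and_congr_right fun hv => ?_
  rw [weight_eq m r s v hv]

lemma ncard_Omega (m r : ℕ) [NeZero r] (hm : 0 < m) (s : Fin r → ℤ) (t : ℤ) :
    (Omega m r s t).ncard = (residueModel m r s t).ncard := by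
  have hm' : (0 : ℤ) < m := by exact_mod_cast hm
  refine Set.ncard_congr (fun v _ => (v 0 % (m : ℤ), (v 0 + s 0) / (m : ℤ))) ?_ ?_ ?_
  · intro v hv
    obtain ⟨h1, -, h3⟩ := (mem_Omega_iff m r hm s t v).1 hv
    refine ⟨⟨Int.emod_nonneg _ hm'.ne', Int.emod_lt_of_pos _ hm'⟩, h1, ?_⟩
    simpa only [Int.emod_add_emod] using h3
  · intro v w hv hw h
    obtain ⟨-, hv2, -⟩ := (mem_Omega_iff m r hm s t v).1 hv
    obtain ⟨-, hw2, -⟩ := (mem_Omega_iff m r hm s t w).1 hw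
    obtain ⟨hc, hk⟩ := Prod.mk.inj h
    have hmod : (v 0 + s 0) % (m : ℤ) = (w 0 + s 0) % (m : ℤ) := by
      rw [← Int.emod_add_emod, hc, Int.emod_add_emod]
    have h0 : v 0 = w 0 := by
      have h4 := Int.emod_add_mul_ediv (v 0 + s 0) (m : ℤ)
      have h5 := Int.emod_add_mul_ediv (w 0 + s 0) (m : ℤ)
      rw [hmod, hk] at h4
      linarith
    funext μ
    by_cases hμ : μ = 0
    · rw [hμ, h0]
    · rw [hv2 μ hμ, hw2 μ hμ, h0]
  · rintro ⟨c, k⟩ ⟨⟨hc0, hcm⟩, hk, ht⟩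
    dsimp only at hc0 hcm hk ht
    -- the unique integer `i ≡ c` modulo `m` with `⌊(i + s₁) / m⌋ = k`
    obtain ⟨i, hi⟩ : ∃ i : ℤ, i = (c + s 0) % (m : ℤ) + (m : ℤ) * k - s 0 := ⟨_, rfl⟩
    have hdiv : (i + s 0) / (m : ℤ) = k := by
      rw [hi, sub_add_cancel, Int.add_mul_ediv_left _ _ hm'.ne',
        Int.ediv_eq_zero_of_lt (Int.emod_nonneg _ hm'.ne') (Int.emod_lt_of_pos _ hm'), zero_add]
    have hmod : i % (m : ℤ) = c := by
      have h1 : i = c + (m : ℤ) * (k - (c + s 0) / (m : ℤ)) := by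
        linarith [Int.emod_add_mul_ediv (c + s 0) (m : ℤ)]
      rw [h1, Int.add_mul_emod_self_left, Int.emod_eq_of_lt hc0 hcm]
    refine ⟨fun μ => if μ = 0 then i else -((i + s μ) / (m : ℤ)), ?_, ?_⟩
    · rw [mem_Omega_iff m r hm]
      refine ⟨?_, ?_, ?_⟩
      · simpa [hdiv] using hk
      · intro μ hμ
        simp [hμ]
      · simp only [if_true, hdiv]
        have : ∀ μ, (i + s μ) % (m : ℤ) = (c + s μ) % (m : ℤ) := fun μ => by
          rw [← hmod, Int.emod_add_emod]
        simpa only [this] using ht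
    · simp [hdiv, hmod]

theorem omega_card_symm (m r : ℕ) [NeZero r] (hm : 0 < m) (hr : 2 ≤ r)
    (hgcd : Nat.gcd r m = 1) (s : Fin r → ℤ) (t : ℤ) (σ : Equiv.Perm (Fin r)) :
    (Omega m r s t).ncard = (Omega m r (s ∘ σ) t).ncard := by
  rw [ncard_Omega m r hm, ncard_Omega m r hm, residueModel_comp_perm]
end
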